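/- Cocycle (cyclic) identity for the surface-charge central extension: Let ξⱼ = (Yⱼ, Wⱼ, Vⱼ) for j = 1, 2, 3 be triples where Yⱼ, Wⱼ : ℝ → ℝ are smooth 2π-periodic functions and Vⱼ ∈ ℝ. Define the bracket [ξ₁, ξ₂] := (Y₁Y₂′ − Y₂Y₁′, Y₁·(W₂′ + V₂/2) − Y₂·(W₁′ + V₁/2), 0) and the pairing K(ξ₁, ξ₂) := ∫₀^{2π} [ W₁(φ)·Y₂″(φ) − W₂(φ)·Y₁″(φ) − W₁(φ)·W₂′(φ) + (V₁/2)·W₂(φ) − (V₂/2)·W₁(φ) ] dφ. Then K([ξ₁,ξ₂], ξ₃) + K([ξ₂,ξ₃], ξ₁) + K([ξ₃,ξ₁], ξ₂) = 0. -/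

import Mathlib

/-- Real triples `(Y, W, V)` with `Y, W : ℝ → ℝ` and `V ∈ ℝ`. -/
abbrev AsympTripleR : Type := (ℝ → ℝ) × (ℝ → ℝ) × ℝ

/-- The elements of the asymptotic symmetry algebra: both function components
are smooth and `2π`-periodic. -/
def IsAsympEltR (x : AsympTripleR) : Prop :=
  ContDiff ℝ (⊤ : ℕ∞) x.1 ∧ Function.Periodic x.1 (2 * Real.pi) ∧
    ContDiff ℝ (⊤ : ℕ∞) x.2.1 ∧ Function.Periodic x.2.1 (2 * Real.pi)

/-- The bracket
`[(Y₁,W₁,V₁),(Y₂,W₂,V₂)] = (Y₁Y₂′ − Y₂Y₁′, Y₁(W₂′ + V₂/2) − Y₂(W₁′ + V₁/2), 0)`. -/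
noncomputable def asympBracketR (x y : AsympTripleR) : AsympTripleR :=
  (fun t => x.1 t * deriv y.1 t - y.1 t * deriv x.1 t,
   fun t => x.1 t * (deriv y.2.1 t + y.2.2 / 2) - y.1 t * (deriv x.2.1 t + x.2.2 / 2),
   0)

/-- The surface-charge central-extension pairing
`K(ξ₁,ξ₂) = ∫₀^{2π} (W₁ Y₂″ − W₂ Y₁″ − W₁ W₂′ + (V₁/2) W₂ − (V₂/2) W₁) dφ`. -/
noncomputable def Kpair (x y : AsympTripleR) : ℝ :=
  ∫ φ in (0 : ℝ)..(2 * Real.pi),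
    (x.2.1 φ * deriv (deriv y.1) φ - y.2.1 φ * deriv (deriv x.1) φ
      - x.2.1 φ * deriv y.2.1 φ + x.2.2 / 2 * y.2.1 φ - y.2.2 / 2 * x.2.1 φ)

/-- A smooth periodic function with its first three derivatives. -/
theorem smooth_data (f : ℝ → ℝ) (hf : ContDiff ℝ (⊤ : ℕ∞) f)
    (hp : Function.Periodic f (2 * Real.pi)) :
    ContDiff ℝ (⊤ : ℕ∞) (deriv f) ∧ Function.Periodic (deriv f) (2 * Real.pi) ∧
      ∀ t, HasDerivAt f (deriv f t) t := by
  refine ⟨?_, ?_, ?_⟩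
  · exact ((contDiff_infty_iff_deriv (𝕜 := ℝ)).1 hf).2
  · intro t
    have h : (fun s => f (s + 2 * Real.pi)) = f := funext hp
    rw [← deriv_comp_add_const, h]
  · intro t
    exact (hf.differentiable (by simp) t).hasDerivAt

/-- Second derivative of the first component of the bracket. -/
theorem deriv2_bracket (f g : ℝ → ℝ) (hf : ContDiff ℝ (⊤ : ℕ∞) f)
    (hg : ContDiff ℝ (⊤ : ℕ∞) g) (hpf : Function.Periodic f (2 * Real.pi))
    (hpg : Function.Periodic g (2 * Real.pi)) :
    deriv (deriv (fun t => f t * deriv g t - g t * deriv f t)) =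
      fun t => deriv f t * deriv (deriv g) t + f t * deriv (deriv (deriv g)) t
        - (deriv g t * deriv (deriv f) t + g t * deriv (deriv (deriv f)) t) := by
  obtain ⟨f1, p1, d0⟩ := smooth_data f hf hpf
  obtain ⟨f2, p2, d1⟩ := smooth_data _ f1 p1
  obtain ⟨f3, p3, d2⟩ := smooth_data _ f2 p2
  obtain ⟨g1, q1, e0⟩ := smooth_data g hg hpg
  obtain ⟨g2, q2, e1⟩ := smooth_data _ g1 q1
  obtain ⟨g3, q3, e2⟩ := smooth_data _ g2 q2
  have h1 : deriv (fun t => f t * deriv g t - g t * deriv f t) =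
      fun t => f t * deriv (deriv g) t - g t * deriv (deriv f) t := by
    funext t
    have := (((d0 t).mul (e1 t)).sub ((e0 t).mul (d1 t))).deriv
    refine Eq.trans this ?_
    ring
  rw [h1]
  funext t
  exact (((d0 t).mul (e2 t)).sub ((e0 t).mul (d2 t))).deriv

/-- Cocycle (cyclic) identity for the surface-charge central extension. -/
theorem stmt_9 (x y z : AsympTripleR)
    (hx : IsAsympEltR x) (hy : IsAsympEltR y) (hz : IsAsympEltR z) :
    Kpair (asympBracketR x y) z + Kpair (asympBracketR y z) x
      + Kpair (asympBracketR z x) y = 0 := by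
  obtain ⟨Y1, W1, V1⟩ := x
  obtain ⟨A1, p1, B1, r1⟩ := hx
  simp only at A1 p1 B1 r1
  obtain ⟨Y2, W2, V2⟩ := y
  obtain ⟨A2, p2, B2, r2⟩ := hy
  simp only at A2 p2 B2 r2
  obtain ⟨Y3, W3, V3⟩ := z
  obtain ⟨A3, p3, B3, r3⟩ := hz
  simp only at A3 p3 B3 r3
  obtain ⟨A11, p11, a1⟩ := smooth_data _ A1 p1
  obtain ⟨A12, p12, b1⟩ := smooth_data _ A11 p11
  obtain ⟨A13, p13, c1⟩ := smooth_data _ A12 p12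
  obtain ⟨B11, r11, w1⟩ := smooth_data _ B1 r1
  have kA1 := A1.continuous
  have kA11 := A11.continuous
  have kA12 := A12.continuous
  have kA13 := A13.continuous
  have kB1 := B1.continuous
  have kB11 := B11.continuous
  obtain ⟨A21, p21, a2⟩ := smooth_data _ A2 p2
  obtain ⟨A22, p22, b2⟩ := smooth_data _ A21 p21
  obtain ⟨A23, p23, c2⟩ := smooth_data _ A22 p22
  obtain ⟨B21, r21, w2⟩ := smooth_data _ B2 r2
  have kA2 := A2.continuous
  have kA21 := A21.continuous
  have kA22 := A22.continuous
  have kA23 := A23.continuous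
  have kB2 := B2.continuous
  have kB21 := B21.continuous
  obtain ⟨A31, p31, a3⟩ := smooth_data _ A3 p3
  obtain ⟨A32, p32, b3⟩ := smooth_data _ A31 p31
  obtain ⟨A33, p33, c3⟩ := smooth_data _ A32 p32
  obtain ⟨B31, r31, w3⟩ := smooth_data _ B3 r3
  have kA3 := A3.continuous
  have kA31 := A31.continuous
  have kA32 := A32.continuous
  have kA33 := A33.continuous
  have kB3 := B3.continuous
  have kB31 := B31.continuous
  simp only [Kpair, asympBracketR]
  rw [deriv2_bracket Y1 Y2 A1 A2 p1 p2]
  rw [deriv2_bracket Y2 Y3 A2 A3 p2 p3]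
  rw [deriv2_bracket Y3 Y1 A3 A1 p3 p1]
  rw [← intervalIntegral.integral_add, ← intervalIntegral.integral_add]
  rotate_left
  iterate 4 (exact Continuous.intervalIntegrable (by fun_prop) _ _)
  let F : ℝ → ℝ := fun t => -((W3 t * (Y1 t * deriv (deriv Y2) t - Y2 t * deriv (deriv Y1) t) + V3 / 2 * (Y1 t * deriv Y2 t - Y2 t * deriv Y1 t))
    + (W1 t * (Y2 t * deriv (deriv Y3) t - Y3 t * deriv (deriv Y2) t) + V1 / 2 * (Y2 t * deriv Y3 t - Y3 t * deriv Y2 t))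
    + (W2 t * (Y3 t * deriv (deriv Y1) t - Y1 t * deriv (deriv Y3) t) + V2 / 2 * (Y3 t * deriv Y1 t - Y1 t * deriv Y3 t)))
  have hF : F (2 * Real.pi) = F 0 := by
    simp only [F]
    have ep1 := p1.eq
    have ep11 := p11.eq
    have ep12 := p12.eq
    have er1 := r1.eq
    have ep2 := p2.eq
    have ep21 := p21.eq
    have ep22 := p22.eq
    have er2 := r2.eq
    have ep3 := p3.eq
    have ep31 := p31.eq
    have ep32 := p32.eq
    have er3 := r3.eq
    simp only [ep1, ep11, ep12, er1, ep2, ep21, ep22, er2, ep3, ep31, ep32, er3]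
  refine Eq.trans ?_ (sub_eq_zero.2 hF)
  apply intervalIntegral.integral_eq_sub_of_hasDerivAt
  · intro t _
    have h := (((((((w3 t).mul (((a1 t).mul (c2 t)).sub ((a2 t).mul (c1 t)))).add
      ((((a1 t).mul (b2 t)).sub ((a2 t).mul (b1 t))).const_mul (V3 / 2)))).add
      ((((w1 t).mul (((a2 t).mul (c3 t)).sub ((a3 t).mul (c2 t)))).add
      ((((a2 t).mul (b3 t)).sub ((a3 t).mul (b2 t))).const_mul (V1 / 2))))).add
      ((((w2 t).mul (((a3 t).mul (c1 t)).sub ((a1 t).mul (c3 t)))).add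
      ((((a3 t).mul (b1 t)).sub ((a1 t).mul (b3 t))).const_mul (V2 / 2)))))).neg
    refine HasDerivAt.congr_deriv (f := F) h ?_
    simp only [Pi.mul_apply, Pi.sub_apply]
    ring
  · exact Continuous.intervalIntegrable (by fun_prop) _ _
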